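/- Let K be a connected abstract simplicial complex with weight function w and suppose κ(F̄, F̄') ≥ k for every pair of connected i-faces F̄ ~ F̄' and some positive real number k. Then for any two distinct i-faces F and F', the distance satisfies d(F, F') ≤ (1/k)·( 2 − (1/(i+1)) Σ_{E ∈ ∂F} w(F)/deg E − (1/(i+1)) Σ_{E ∈ ∂F'} w(F')/deg E ). -/

import Mathlib

/-!
Weak Kantorovich duality against the `1`-Lipschitz function `f = d(F, ·)` gives the bound.  Along a
geodesic `F = F_0 ~ ... ~ F_d = F'` the mean of `f` grows from `m_{F_j}^ε` to `m_{F_{j+1}}^ε` by at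
most `W(m_{F_j}^ε, m_{F_{j+1}}^ε) = 1 - κ_ε(F_j, F_{j+1})`, hence by at most `1 - ε k'` for small
`ε`, where `k' < k` (`duality`, `mean_chain_le`).  On the other hand `m_F^ε` places the mass
`ε J(F)`, `J(F) = 1 - (1/(i+1)) Σ_{E ∈ ∂F} w(F)/deg E`, on neighbours of `F`, so the mean of `f` is
at most `ε J(F)` at `F` and at least `d - ε J(F')` at `F'` (`mean_le`, `le_mean`).  Comparing,
`d - ε (J(F) + J(F')) ≤ d (1 - ε k')`, that is `d k' ≤ J(F) + J(F')`; then `k' → k`.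

The hypothesis speaks of a limit, whose existence is `tendsto_ricci`: since `m_F^{tε}` is the
mixture `(1-t) δ_F + t m_F^ε`, the Wasserstein distance is convex in `ε`, which makes `κ_ε / ε`
antitone, and the same duality bounds it above by `J(F) + J(F')`.
-/

open Finset Filter

namespace SCRicci

variable {V : Type*}

/-- `K` is an abstract simplicial complex: faces are nonempty finite sets and
nonempty subsets of faces are again faces. -/
def IsComplex [DecidableEq V] (K : Finset (Finset V)) : Prop :=
  ∀ F ∈ K, F.Nonempty ∧ ∀ E : Finset V, E ⊆ F → E.Nonempty → E ∈ K

/-- The set `S_i(K)` of `i`-faces of `K` (faces of cardinality `i+1`). -/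
def faces [DecidableEq V] (K : Finset (Finset V)) (i : ℕ) : Finset (Finset V) :=
  K.filter fun F => F.card = i + 1

/-- Two `i`-faces are connected, `F ~ F'`, if they are distinct and share a common
`(i-1)`-face, which is necessarily `F ∩ F'`. -/
def Conn [DecidableEq V] (i : ℕ) (F F' : Finset V) : Prop :=
  F ≠ F' ∧ (F ∩ F').card = i

noncomputable section

/-- The degree of an `(i-1)`-face `E`: the sum of the weights of the `i`-faces
containing `E`. -/
def deg [DecidableEq V] (K : Finset (Finset V)) (w : Finset V → ℝ) (i : ℕ)
    (E : Finset V) : ℝ :=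
  ∑ F ∈ faces K i, if E ⊆ F then w F else 0

/-- `Chain K i n F F'`: there is a path of length `n` of consecutively connected
`i`-faces from `F` to `F'`. -/
def Chain [DecidableEq V] (K : Finset (Finset V)) (i : ℕ) :
    ℕ → Finset V → Finset V → Prop
  | 0, F, F' => F = F'
  | n + 1, F, F' => ∃ G ∈ faces K i, Conn i F G ∧ Chain K i n G F'

/-- The distance between two `i`-faces: the length of a shortest path of
consecutively connected `i`-faces. -/
def fdist [DecidableEq V] (K : Finset (Finset V)) (i : ℕ) (F F' : Finset V) : ℕ :=
  sInf {n | Chain K i n F F'}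

/-- `K` is connected in dimension `i`: any two `i`-faces are joined by a path of
consecutively connected `i`-faces. -/
def ComplexConnected [DecidableEq V] (K : Finset (Finset V)) (i : ℕ) : Prop :=
  ∀ F ∈ faces K i, ∀ F' ∈ faces K i, ∃ n, Chain K i n F F'

/-- The probability measure `m_F^ε` on the `i`-faces of `K`. -/
def pm [DecidableEq V] (K : Finset (Finset V)) (w : Finset V → ℝ) (i : ℕ) (ε : ℝ)
    (F F' : Finset V) : ℝ :=
  if F' = F then
    1 - ε + ε / ((i : ℝ) + 1) * ∑ E ∈ F.powersetCard i, w F / deg K w i E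
  else if F' ∈ faces K i ∧ (F ∩ F').card = i then
    ε * w F' / (((i : ℝ) + 1) * deg K w i (F ∩ F'))
  else 0

/-- The 1-Wasserstein distance between two measures on the `i`-faces of `K`:
the infimum of the transport cost over all couplings. -/
def Wass [DecidableEq V] (K : Finset (Finset V)) (i : ℕ) (μ ν : Finset V → ℝ) : ℝ :=
  sInf {c : ℝ | ∃ A : Finset V → Finset V → ℝ,
    (∀ F₁ F₂, 0 ≤ A F₁ F₂) ∧
    (∀ F₁ ∈ faces K i, ∑ F₂ ∈ faces K i, A F₁ F₂ = μ F₁) ∧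
    (∀ F₂ ∈ faces K i, ∑ F₁ ∈ faces K i, A F₁ F₂ = ν F₂) ∧
    c = ∑ F₁ ∈ faces K i, ∑ F₂ ∈ faces K i, A F₁ F₂ * (fdist K i F₁ F₂ : ℝ)}

/-- The `ε`-Ricci curvature of two distinct `i`-faces:
`κ_ε(F, F') = 1 - W(m_F^ε, m_{F'}^ε) / d(F, F')`. -/
def kappaEps [DecidableEq V] (K : Finset (Finset V)) (w : Finset V → ℝ) (i : ℕ)
    (ε : ℝ) (F F' : Finset V) : ℝ :=
  1 - Wass K i (pm K w i ε F) (pm K w i ε F') / (fdist K i F F' : ℝ)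

/-- The Ricci curvature `κ(F, F')`: the limit of `κ_ε(F, F') / ε` as `ε → 0+`. -/
def ricci [DecidableEq V] (K : Finset (Finset V)) (w : Finset V → ℝ) (i : ℕ)
    (F F' : Finset V) : ℝ :=
  limUnder (nhdsWithin (0 : ℝ) (Set.Ioi 0)) fun ε => kappaEps K w i ε F F' / ε

/-! ### Paths and distance -/

lemma chain_trans [DecidableEq V] {K : Finset (Finset V)} {i : ℕ} :
    ∀ {m n : ℕ} {F G H : Finset V}, Chain K i m F G → Chain K i n G H →
      Chain K i (m + n) F H := by
  intro m
  induction m with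
  | zero =>
    intro n F G H h1 h2
    have h : F = G := h1
    subst h
    simpa using h2
  | succ m ih =>
    intro n F G H h1 h2
    obtain ⟨A, hA, hc, h⟩ := h1
    rw [Nat.succ_add]
    exact ⟨A, hA, hc, ih h h2⟩

lemma chain_fdist [DecidableEq V] {K : Finset (Finset V)} {i : ℕ}
    (hconn : ComplexConnected K i) {F G : Finset V} (hF : F ∈ faces K i)
    (hG : G ∈ faces K i) : Chain K i (fdist K i F G) F G :=
  Nat.sInf_mem (s := {n | Chain K i n F G}) (hconn F hF G hG)

lemma fdist_le [DecidableEq V] {K : Finset (Finset V)} {i n : ℕ} {F G : Finset V}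
    (h : Chain K i n F G) : fdist K i F G ≤ n :=
  Nat.sInf_le (s := {n | Chain K i n F G}) h

lemma fdist_self [DecidableEq V] (K : Finset (Finset V)) (i : ℕ) (F : Finset V) :
    fdist K i F F = 0 :=
  Nat.le_zero.mp (fdist_le (n := 0) rfl)

lemma fdist_triangle [DecidableEq V] {K : Finset (Finset V)} {i : ℕ}
    (hconn : ComplexConnected K i) {F G H : Finset V} (hF : F ∈ faces K i)
    (hG : G ∈ faces K i) (hH : H ∈ faces K i) :
    (fdist K i F H : ℝ) ≤ fdist K i F G + fdist K i G H := by
  exact_mod_cast fdist_le (chain_trans (chain_fdist hconn hF hG) (chain_fdist hconn hG hH))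

lemma fdist_le_one [DecidableEq V] {K : Finset (Finset V)} {i : ℕ} {F G : Finset V}
    (hG : G ∈ faces K i) (h : Conn i F G) : fdist K i F G ≤ 1 :=
  fdist_le ⟨G, hG, h, rfl⟩

lemma fdist_eq_one [DecidableEq V] {K : Finset (Finset V)} {i : ℕ}
    (hconn : ComplexConnected K i) {F G : Finset V} (hF : F ∈ faces K i)
    (hG : G ∈ faces K i) (h : Conn i F G) : fdist K i F G = 1 := by
  have h1 := fdist_le_one hG h
  have h2 := chain_fdist hconn hF hG
  rcases Nat.le_one_iff_eq_zero_or_eq_one.mp h1 with h0 | h0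
  · rw [h0] at h2
    exact absurd h2 h.1
  · exact h0

/-! ### The random walk measures -/

/-- The escape rate `J(F) = 1 - (1/(i+1)) Σ_{E ∈ ∂F} w(F)/deg E`: the mass that `m_F^ε` places
outside `F` is `ε J(F)`. -/
def escape [DecidableEq V] (K : Finset (Finset V)) (w : Finset V → ℝ) (i : ℕ)
    (F : Finset V) : ℝ :=
  1 - 1 / ((i : ℝ) + 1) * ∑ E ∈ F.powersetCard i, w F / deg K w i E

lemma pm_self [DecidableEq V] (K : Finset (Finset V)) (w : Finset V → ℝ) (i : ℕ) (ε : ℝ)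
    (F : Finset V) : pm K w i ε F F = 1 - ε * escape K w i F := by
  simp only [pm, escape, if_true]
  ring

lemma weight_pos [DecidableEq V] {K : Finset (Finset V)} {w : Finset V → ℝ} {i : ℕ}
    (hwpos : ∀ F ∈ K, 0 < w F) {F : Finset V} (hF : F ∈ faces K i) : 0 < w F :=
  hwpos F (mem_filter.mp hF).1

lemma deg_nonneg [DecidableEq V] {K : Finset (Finset V)} {w : Finset V → ℝ} {i : ℕ}
    (hwpos : ∀ F ∈ K, 0 < w F) (E : Finset V) : 0 ≤ deg K w i E := by
  refine sum_nonneg fun F hF => ?_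
  split_ifs
  · exact (weight_pos hwpos hF).le
  · exact le_rfl

lemma deg_pos [DecidableEq V] {K : Finset (Finset V)} {w : Finset V → ℝ} {i : ℕ}
    (hwpos : ∀ F ∈ K, 0 < w F) {E F : Finset V} (hF : F ∈ faces K i) (hE : E ⊆ F) :
    0 < deg K w i E := by
  refine sum_pos' (fun G hG => ?_) ⟨F, hF, ?_⟩
  · split_ifs
    · exact (weight_pos hwpos hG).le
    · exact le_rfl
  · rw [if_pos hE]
    exact weight_pos hwpos hF

lemma pm_nonneg [DecidableEq V] {K : Finset (Finset V)} {w : Finset V → ℝ} {i : ℕ}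
    (hwpos : ∀ F ∈ K, 0 < w F) {ε : ℝ} (h0 : 0 ≤ ε) (h1 : ε ≤ 1) {F : Finset V}
    (hF : F ∈ faces K i) (G : Finset V) : 0 ≤ pm K w i ε F G := by
  unfold pm
  split_ifs with h h'
  · have : 0 ≤ ∑ E ∈ F.powersetCard i, w F / deg K w i E :=
      sum_nonneg fun E _ => div_nonneg (weight_pos hwpos hF).le (deg_nonneg hwpos E)
    have := mul_nonneg (div_nonneg h0 (by positivity : (0 : ℝ) ≤ (i : ℝ) + 1)) this
    linarith
  · have := (weight_pos hwpos h'.1).le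
    have := deg_nonneg (i := i) hwpos (F ∩ G)
    positivity
  · exact le_rfl

/-- An `(i-1)`-face shared by two distinct `i`-faces `F`, `G` is `F ∩ G`, so a sum over the
boundary faces of `F` contained in `G` has at most one term. -/
lemma sum_boundary_common [DecidableEq V] {i : ℕ} {F G : Finset V} (hF : F.card = i + 1)
    (hG : G.card = i + 1) (hne : G ≠ F) (g : Finset V → ℝ) :
    ∑ E ∈ F.powersetCard i, (if E ⊆ G then g E else 0) =
      if (F ∩ G).card = i then g (F ∩ G) else 0 := by
  have hlt : (F ∩ G).card ≤ i := by
    by_contra hc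
    push Not at hc
    have h1 : F ∩ G = F := eq_of_subset_of_card_le inter_subset_left (by omega)
    have h2 : F ∩ G = G := eq_of_subset_of_card_le inter_subset_right (by omega)
    exact hne (h2.symm.trans h1)
  have key : ∀ E ∈ F.powersetCard i, E ⊆ G → E = F ∩ G := by
    intro E hE hEG
    rw [mem_powersetCard] at hE
    exact eq_of_subset_of_card_le (subset_inter hE.1 hEG) (by omega)
  split_ifs with h
  · rw [sum_eq_single (F ∩ G)]
    · rw [if_pos inter_subset_right]
    · intro E hE hEne
      rw [if_neg fun hc => hEne (key E hE hc)]
    · intro hn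
      exact absurd (mem_powersetCard.mpr ⟨inter_subset_left, h⟩) hn
  · refine sum_eq_zero fun E hE => if_neg fun hc => h ?_
    rw [← key E hE hc]
    exact (mem_powersetCard.mp hE).2

/-- `m_F^ε` has total mass one: the terms at a fixed boundary face `E` of `F`, including that of
`F` itself, add up to `deg E / deg E`. -/
lemma pm_sum [DecidableEq V] {K : Finset (Finset V)} {w : Finset V → ℝ} {i : ℕ}
    (hwpos : ∀ F ∈ K, 0 < w F) (ε : ℝ) {F : Finset V} (hF : F ∈ faces K i) :
    ∑ G ∈ faces K i, pm K w i ε F G = 1 := by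
  have hFc : F.card = i + 1 := (mem_filter.mp hF).2
  have hi0 : (i : ℝ) + 1 ≠ 0 := by positivity
  have hoff : ∀ G ∈ (faces K i).erase F, pm K w i ε F G =
      ε / ((i : ℝ) + 1) *
        ∑ E ∈ F.powersetCard i, if E ⊆ G then w G / deg K w i E else 0 := by
    intro G hG
    obtain ⟨hne, hG⟩ := mem_erase.mp hG
    rw [sum_boundary_common hFc (mem_filter.mp hG).2 hne fun E => w G / deg K w i E]
    simp only [pm, if_neg hne, hG, true_and]
    split_ifs
    · rw [div_mul_div_comm]
    · simp
  have hall : ∑ E ∈ F.powersetCard i, (w F / deg K w i E +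
      ∑ G ∈ (faces K i).erase F, if E ⊆ G then w G / deg K w i E else 0) = (i : ℝ) + 1 := by
    have : ∀ E ∈ F.powersetCard i, (w F / deg K w i E +
        ∑ G ∈ (faces K i).erase F, if E ⊆ G then w G / deg K w i E else 0) = 1 := by
      intro E hE
      have hEF := (mem_powersetCard.mp hE).1
      have hd := deg_pos hwpos hF hEF
      have hs : deg K w i E = w F + ∑ G ∈ (faces K i).erase F, if E ⊆ G then w G else 0 := by
        unfold deg
        rw [← add_sum_erase _ _ hF, if_pos hEF]
      have hs' : (∑ G ∈ (faces K i).erase F, if E ⊆ G then w G / deg K w i E else 0) =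
          (∑ G ∈ (faces K i).erase F, if E ⊆ G then w G else 0) / deg K w i E := by
        rw [sum_div]
        refine sum_congr rfl fun G _ => ?_
        split_ifs <;> simp
      rw [hs', ← add_div, ← hs, div_self hd.ne']
    rw [sum_congr rfl this]
    simp [card_powersetCard, hFc]
  rw [← add_sum_erase _ _ hF, sum_congr rfl hoff, ← mul_sum, sum_comm, pm_self, escape]
  rw [sum_add_distrib] at hall
  rw [eq_sub_of_add_eq' hall]
  field_simp
  ring

/-- `m_F^ε` is supported on `F` and the faces connected to it. -/
lemma pm_eq_zero_or_conn [DecidableEq V] {K : Finset (Finset V)} {w : Finset V → ℝ} {i : ℕ}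
    {ε : ℝ} {F G : Finset V} (hne : G ≠ F) : pm K w i ε F G = 0 ∨ Conn i F G := by
  unfold pm
  rw [if_neg hne]
  split_ifs with h
  · exact Or.inr ⟨hne.symm, h.2⟩
  · exact Or.inl rfl

/-- The lazy walk `m_F^{tε}` is the mixture `(1-t) δ_F + t m_F^ε`. -/
lemma pm_mul [DecidableEq V] (K : Finset (Finset V)) (w : Finset V → ℝ) (i : ℕ) (t ε : ℝ)
    (F G : Finset V) :
    pm K w i (t * ε) F G = (1 - t) * (if G = F then 1 else 0) + t * pm K w i ε F G := by
  unfold pm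
  split_ifs <;> ring

/-! ### Wasserstein distance -/

/-- The costs of couplings whose infimum is `Wass`. -/
def costs [DecidableEq V] (K : Finset (Finset V)) (i : ℕ) (μ ν : Finset V → ℝ) : Set ℝ :=
  {c : ℝ | ∃ A : Finset V → Finset V → ℝ,
    (∀ F₁ F₂, 0 ≤ A F₁ F₂) ∧
    (∀ F₁ ∈ faces K i, ∑ F₂ ∈ faces K i, A F₁ F₂ = μ F₁) ∧
    (∀ F₂ ∈ faces K i, ∑ F₁ ∈ faces K i, A F₁ F₂ = ν F₂) ∧
    c = ∑ F₁ ∈ faces K i, ∑ F₂ ∈ faces K i, A F₁ F₂ * (fdist K i F₁ F₂ : ℝ)}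

lemma wass_eq [DecidableEq V] (K : Finset (Finset V)) (i : ℕ) (μ ν : Finset V → ℝ) :
    Wass K i μ ν = sInf (costs K i μ ν) := rfl

lemma costs_bddBelow [DecidableEq V] (K : Finset (Finset V)) (i : ℕ) (μ ν : Finset V → ℝ) :
    BddBelow (costs K i μ ν) := by
  refine ⟨0, ?_⟩
  rintro c ⟨A, hA, -, -, rfl⟩
  exact sum_nonneg fun F _ => sum_nonneg fun G _ => mul_nonneg (hA F G) (Nat.cast_nonneg _)

/-- The product coupling shows that couplings of two walk measures exist, so that `Wass` is a
genuine infimum. -/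
lemma costs_nonempty [DecidableEq V] {K : Finset (Finset V)} {w : Finset V → ℝ} {i : ℕ}
    (hwpos : ∀ F ∈ K, 0 < w F) {ε : ℝ} (h0 : 0 ≤ ε) (h1 : ε ≤ 1) {F G : Finset V}
    (hF : F ∈ faces K i) (hG : G ∈ faces K i) :
    (costs K i (pm K w i ε F) (pm K w i ε G)).Nonempty := by
  refine ⟨_, fun A B => pm K w i ε F A * pm K w i ε G B, fun A B => ?_, fun A _ => ?_,
    fun B _ => ?_, rfl⟩
  · exact mul_nonneg (pm_nonneg hwpos h0 h1 hF A) (pm_nonneg hwpos h0 h1 hG B)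
  · rw [← mul_sum, pm_sum hwpos ε hG, mul_one]
  · rw [← sum_mul, pm_sum hwpos ε hF, one_mul]

/-- Weak Kantorovich duality for the `1`-Lipschitz function `d(B, ·)`. -/
lemma duality [DecidableEq V] {K : Finset (Finset V)} {w : Finset V → ℝ} {i : ℕ}
    (hconn : ComplexConnected K i)
    (hwpos : ∀ F ∈ K, 0 < w F) {ε : ℝ} (h0 : 0 ≤ ε) (h1 : ε ≤ 1) {B F G : Finset V}
    (hB : B ∈ faces K i) (hF : F ∈ faces K i) (hG : G ∈ faces K i) :
    ∑ H ∈ faces K i, pm K w i ε G H * fdist K i B H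
      - ∑ H ∈ faces K i, pm K w i ε F H * fdist K i B H
      ≤ Wass K i (pm K w i ε F) (pm K w i ε G) := by
  rw [wass_eq]
  refine le_csInf (costs_nonempty hwpos h0 h1 hF hG) ?_
  rintro c ⟨A, hA, hμ, hν, rfl⟩
  have e1 : ∑ H ∈ faces K i, pm K w i ε G H * fdist K i B H =
      ∑ F₁ ∈ faces K i, ∑ F₂ ∈ faces K i, A F₁ F₂ * (fdist K i B F₂ : ℝ) := by
    rw [sum_comm]
    exact sum_congr rfl fun H hH => by rw [← hν H hH, sum_mul]
  have e2 : ∑ H ∈ faces K i, pm K w i ε F H * fdist K i B H =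
      ∑ F₁ ∈ faces K i, ∑ F₂ ∈ faces K i, A F₁ F₂ * (fdist K i B F₁ : ℝ) :=
    sum_congr rfl fun H hH => by rw [← hμ H hH, sum_mul]
  rw [e1, e2, sub_le_iff_le_add, ← sum_add_distrib]
  refine sum_le_sum fun F₁ hF₁ => ?_
  rw [← sum_add_distrib]
  refine sum_le_sum fun F₂ hF₂ => ?_
  rw [← mul_add]
  refine mul_le_mul_of_nonneg_left ?_ (hA F₁ F₂)
  linarith [fdist_triangle hconn hB hF₁ hF₂]

/-- The mean distance from `F` under `m_F^ε` is at most the escaping mass. -/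
lemma mean_le [DecidableEq V] {K : Finset (Finset V)} {w : Finset V → ℝ} {i : ℕ}
    (hwpos : ∀ F ∈ K, 0 < w F) {ε : ℝ} (h0 : 0 ≤ ε) (h1 : ε ≤ 1) {F : Finset V}
    (hF : F ∈ faces K i) :
    ∑ H ∈ faces K i, pm K w i ε F H * fdist K i F H ≤ ε * escape K w i F := by
  have hs := pm_sum hwpos ε hF
  rw [← add_sum_erase _ _ hF, pm_self] at hs
  rw [← add_sum_erase _ _ hF, fdist_self]
  have : ∑ H ∈ (faces K i).erase F, pm K w i ε F H * fdist K i F H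
      ≤ ∑ H ∈ (faces K i).erase F, pm K w i ε F H := by
    refine sum_le_sum fun H hH => ?_
    obtain ⟨hne, hH⟩ := mem_erase.mp hH
    rcases pm_eq_zero_or_conn (K := K) (w := w) (i := i) (ε := ε) hne with h | h
    · simp [h]
    · have h2 : (fdist K i F H : ℝ) ≤ 1 := by exact_mod_cast fdist_le_one hH h
      exact mul_le_of_le_one_right (pm_nonneg hwpos h0 h1 hF H) h2
  push_cast
  linarith

/-- The mean distance from `B` under `m_F^ε` falls short of `d(B, F)` by at most the escaping
mass. -/
lemma le_mean [DecidableEq V] {K : Finset (Finset V)} {w : Finset V → ℝ} {i : ℕ}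
    (hconn : ComplexConnected K i)
    (hwpos : ∀ F ∈ K, 0 < w F) {ε : ℝ} (h0 : 0 ≤ ε) (h1 : ε ≤ 1) {B F : Finset V}
    (hB : B ∈ faces K i) (hF : F ∈ faces K i) :
    fdist K i B F - ε * escape K w i F
      ≤ ∑ H ∈ faces K i, pm K w i ε F H * fdist K i B H := by
  have hs := pm_sum hwpos ε hF
  rw [← add_sum_erase _ _ hF, pm_self] at hs
  rw [← add_sum_erase _ _ hF, pm_self]
  have : ∑ H ∈ (faces K i).erase F, pm K w i ε F H * ((fdist K i B F : ℝ) - 1)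
      ≤ ∑ H ∈ (faces K i).erase F, pm K w i ε F H * fdist K i B H := by
    refine sum_le_sum fun H hH => ?_
    obtain ⟨hne, hH⟩ := mem_erase.mp hH
    rcases pm_eq_zero_or_conn (K := K) (w := w) (i := i) (ε := ε) hne with h | h
    · simp [h]
    · have hc : Conn i H F := ⟨hne, by rw [inter_comm]; exact h.2⟩
      have h2 : (fdist K i H F : ℝ) ≤ 1 := by exact_mod_cast fdist_le_one hF hc
      refine mul_le_mul_of_nonneg_left ?_ (pm_nonneg hwpos h0 h1 hF H)
      linarith [fdist_triangle hconn hB hH hF]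
  rw [← sum_mul, eq_sub_of_add_eq' hs] at this
  linarith

/-- `W` is convex along the mixture of `pm_mul`: to a coupling for `ε`, scaled by `t`, add
mass `1 - t` moved from `F` to `G`. -/
lemma wass_mul_le [DecidableEq V] {K : Finset (Finset V)} {w : Finset V → ℝ} {i : ℕ}
    (hwpos : ∀ F ∈ K, 0 < w F) {ε t : ℝ} (h0 : 0 ≤ ε) (h1 : ε ≤ 1) (ht0 : 0 < t) (ht1 : t ≤ 1)
    {F G : Finset V} (hF : F ∈ faces K i) (hG : G ∈ faces K i) :
    Wass K i (pm K w i (t * ε) F) (pm K w i (t * ε) G)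
      ≤ (1 - t) * fdist K i F G + t * Wass K i (pm K w i ε F) (pm K w i ε G) := by
  rw [← sub_le_iff_le_add', ← div_le_iff₀' ht0, wass_eq K i (pm K w i ε F)]
  refine le_csInf (costs_nonempty hwpos h0 h1 hF hG) ?_
  rintro c ⟨A, hA, hμ, hν, rfl⟩
  rw [div_le_iff₀' ht0, sub_le_iff_le_add']
  refine csInf_le (costs_bddBelow K i _ _)
    ⟨fun P Q => (1 - t) * ((if P = F then 1 else 0) * (if Q = G then 1 else 0)) + t * A P Q,
      fun P Q => ?_, fun P hP => ?_, fun Q hQ => ?_, ?_⟩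
  · have := hA P Q
    have : 0 ≤ 1 - t := by linarith
    dsimp only
    split_ifs <;> positivity
  · rw [sum_add_distrib, ← mul_sum, ← mul_sum, ← mul_sum, hμ P hP, sum_ite_eq', if_pos hG,
      mul_one, pm_mul]
  · rw [sum_add_distrib, ← mul_sum, ← mul_sum, ← sum_mul, hν Q hQ, sum_ite_eq', if_pos hF,
      one_mul, pm_mul]
  · simp only [add_mul, sum_add_distrib, mul_assoc, ← mul_sum]
    congr 1
    simp [hF, hG]

/-! ### The limit defining the curvature -/

lemma kappaEps_le [DecidableEq V] {K : Finset (Finset V)} {w : Finset V → ℝ} {i : ℕ}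
    (hconn : ComplexConnected K i)
    (hwpos : ∀ F ∈ K, 0 < w F) {ε : ℝ} (h0 : 0 ≤ ε) (h1 : ε ≤ 1) {F G : Finset V}
    (hF : F ∈ faces K i) (hG : G ∈ faces K i) (h : Conn i F G) :
    kappaEps K w i ε F G ≤ ε * (escape K w i F + escape K w i G) := by
  have a := duality hconn hwpos h0 h1 hF hF hG
  have b := mean_le hwpos h0 h1 hF
  have c := le_mean hconn hwpos h0 h1 hF hG
  have hd := fdist_eq_one hconn hF hG h
  rw [hd] at c
  unfold kappaEps
  rw [hd]
  push_cast at c ⊢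
  linarith

/-- For connected faces `κ_ε / ε` is antitone in `ε` and bounded, so the limit defining the Ricci
curvature exists and `ricci` is not a junk value. -/
lemma tendsto_ricci [DecidableEq V] {K : Finset (Finset V)} {w : Finset V → ℝ} {i : ℕ}
    (hconn : ComplexConnected K i)
    (hwpos : ∀ F ∈ K, 0 < w F) {F G : Finset V}
    (hF : F ∈ faces K i) (hG : G ∈ faces K i) (h : Conn i F G) :
    Tendsto (fun ε => kappaEps K w i ε F G / ε) (nhdsWithin (0 : ℝ) (Set.Ioi 0))
      (nhds (ricci K w i F G)) := by
  refine tendsto_nhds_limUnder ⟨_, AntitoneOn.tendsto_nhdsWithin_Ioo_right (y := 1)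
    (Set.nonempty_Ioo.mpr one_pos) ?_ ?_⟩
  · intro x hx y hy hxy
    have hy0 : 0 < y := hy.1
    have hx0 : 0 < x := hx.1
    have hw := wass_mul_le hwpos hy0.le hy.2.le (div_pos hx0 hy0) ((div_le_one hy0).mpr hxy) hF hG
    rw [div_mul_cancel₀ _ hy0.ne'] at hw
    simp only [kappaEps]
    rw [fdist_eq_one hconn hF hG h] at hw ⊢
    rw [le_div_iff₀ hx0]
    push_cast at hw ⊢
    have e : (1 - Wass K i (pm K w i y F) (pm K w i y G) / 1) / y * x =
      x / y - x / y * Wass K i (pm K w i y F) (pm K w i y G) := by ring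
    rw [e]
    linarith
  · refine ⟨escape K w i F + escape K w i G, ?_⟩
    rintro _ ⟨x, hx, rfl⟩
    have hx0 : 0 < x := hx.1
    simp only
    rw [div_le_iff₀' hx0]
    exact kappaEps_le hconn hwpos hx0.le hx.2.le hF hG h

/-- Along a path of length `n` the mean distance from `B` grows by at most `n (1 - ε k')` for
small `ε`, where `k'` is any strict lower bound of the curvature. -/
lemma mean_chain_le [DecidableEq V] {K : Finset (Finset V)} {w : Finset V → ℝ} {i : ℕ}
    (hconn : ComplexConnected K i) (hwpos : ∀ F ∈ K, 0 < w F) {k' : ℝ}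
    (hk : ∀ F ∈ faces K i, ∀ G ∈ faces K i, Conn i F G → k' < ricci K w i F G)
    {B G : Finset V} (hB : B ∈ faces K i) :
    ∀ (n : ℕ) (F : Finset V), F ∈ faces K i → Chain K i n F G →
      ∀ᶠ ε in nhdsWithin (0 : ℝ) (Set.Ioi 0),
        ∑ H ∈ faces K i, pm K w i ε G H * fdist K i B H
          - ∑ H ∈ faces K i, pm K w i ε F H * fdist K i B H ≤ n * (1 - ε * k') := by
  intro n
  induction n with
  | zero =>
    intro F _ hc
    have h : F = G := hc
    subst h
    simp
  | succ n ih =>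
    intro F hF ⟨A, hA, hFA, hc⟩
    have hev := (tendsto_ricci hconn hwpos hF hA hFA).eventually_const_lt (hk F hF A hA hFA)
    have h01 : Set.Ioo (0 : ℝ) 1 ∈ nhdsWithin (0 : ℝ) (Set.Ioi 0) :=
      Ioo_mem_nhdsGT one_pos
    filter_upwards [ih A hA hc, hev, h01] with ε e1 e2 e3
    have hd := duality hconn hwpos e3.1.le e3.2.le hB hF hA
    rw [lt_div_iff₀ e3.1, kappaEps, fdist_eq_one hconn hF hA hFA] at e2
    push_cast at e2 ⊢
    linarith

/-- If `κ ≥ k > 0` on connected `i`-faces, then for any two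
distinct `i`-faces `F`, `F'`,
`d(F,F') ≤ (1/k)·(2 - (1/(i+1)) Σ_{E ∈ ∂F} w(F)/deg E
- (1/(i+1)) Σ_{E ∈ ∂F'} w(F')/deg E)`. -/
theorem diameter_bound {V : Type*} [Fintype V] [DecidableEq V]
    (K : Finset (Finset V)) (i : ℕ) (hi : 1 ≤ i)
    (hK : IsComplex K) (hconn : ComplexConnected K i)
    (w : Finset V → ℝ) (hwpos : ∀ F ∈ K, 0 < w F)
    (k : ℝ) (hkpos : 0 < k)
    (hk : ∀ Fb ∈ faces K i, ∀ Fb' ∈ faces K i, Conn i Fb Fb' → k ≤ ricci K w i Fb Fb')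
    (F F' : Finset V) (hF : F ∈ faces K i) (hF' : F' ∈ faces K i) (hne : F ≠ F') :
    (fdist K i F F' : ℝ) ≤ 1 / k *
      (2 - 1 / ((i : ℝ) + 1) * ∑ E ∈ F.powersetCard i, w F / deg K w i E
         - 1 / ((i : ℝ) + 1) * ∑ E ∈ F'.powersetCard i, w F' / deg K w i E) := by
  have hmain : (fdist K i F F' : ℝ) * k ≤ escape K w i F + escape K w i F' := by
    have hd0 : (0 : ℝ) ≤ fdist K i F F' := Nat.cast_nonneg _
    -- The curvature is a limit, so only constants `k' < k` bound `κ_ε / ε` for small `ε`.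
    have hlt : ∀ k' < k, (fdist K i F F' : ℝ) * k' ≤ escape K w i F + escape K w i F' := by
      intro k' hk'
      have hev := mean_chain_le hconn hwpos
        (fun A hA B hB h => hk'.trans_le (hk A hA B hB h)) hF _ F hF (chain_fdist hconn hF hF')
      have h01 : Set.Ioo (0 : ℝ) 1 ∈ nhdsWithin (0 : ℝ) (Set.Ioi 0) := Ioo_mem_nhdsGT one_pos
      obtain ⟨ε, e1, e2⟩ := (hev.and h01).exists
      have b := mean_le hwpos e2.1.le e2.2.le hF
      have c := le_mean hconn hwpos e2.1.le e2.2.le hF hF'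
      refine le_of_mul_le_mul_left ?_ e2.1
      linarith
    have ht : Tendsto (fun k' : ℝ => (fdist K i F F' : ℝ) * k') (nhdsWithin k (Set.Iio k))
        (nhds ((fdist K i F F' : ℝ) * k)) :=
      ((continuous_const.mul continuous_id).tendsto k).mono_left nhdsWithin_le_nhds
    exact le_of_tendsto ht (eventually_mem_nhdsWithin.mono hlt)
  rw [one_div_mul_eq_div, le_div_iff₀ hkpos]
  unfold escape at hmain
  linarith

end
end SCRicci
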